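/- Let Γ be a finitely generated group with finite generating set X, and suppose Γ has property (A) witnessed by a representation ρ : Γ → SL(m, O_S) into matrices over a ring of S-integers O_S of a number field, such that non-conjugate elements have distinct traces under ρ. Then there is a constant C (depending on Γ, X, ρ) such that for all non-conjugate γ, η ∈ Γ with word lengths at most n, Con_Γ([γ],[η]) ≤ C·n^{m²−1}; consequently Conj_Γ(n) ⪯ n^{m²−1}. -/

import Mathlib

/-!
Traces are conjugation invariant, so a prime ideal `P` modulo which `ρ` makes sense and
`tr ρ(γ) - tr ρ(η)` survives gives a separating quotient inside `SL(m, 𝓞 K ⧸ P)`. Clearing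
denominators turns the trace difference into a nonzero integer `a` with `log N(a) = O(n)`, and such
an `a` avoids some `P` with `N P = O(n)` as soon as the Chebyshev function `θ_K(X)` is bounded below
by a multiple of `X`.

For this bound let `A` be a box of algebraic integers and `w` a shift that is large compared to `A`.
Modulo `P ^ k` the coincidences `α + w ≡ β` with `α, β ∈ A` are at most as many as the coincidences
`α ≡ β`, because `2xy ≤ x² + y²`. Weighted by `log N P` and summed over prime powers, this bounds
the sum of `log N(α - β + w)` by the off-diagonal sum of `log N(α - β)` plus `|A| ψ_K(Q)`, where `Q`
bounds all norms. Since `w` is large the first sum exceeds the second by at least `|A|²`, whence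
`ψ_K(Q) ≥ |A|`. Finally `ψ_K - θ_K` only involves primes of norm at most `√Q`, so it is `o(Q)`.
-/

/-- `γ` has word length at most `n` with respect to the generating set `X`. -/
def inBall {Γ : Type*} [Group Γ] (X : Finset Γ) (n : ℕ) (γ : Γ) : Prop :=
  ∃ l : List Γ, (∀ x ∈ l, x ∈ X ∨ x⁻¹ ∈ X) ∧ l.length ≤ n ∧ l.prod = γ

section Collisions

open Finset

theorem card_filter_eq_eq_sum_mul {ι κ : Type*} [DecidableEq κ] {A : Finset ι} {f : ι → κ}
    (g : ι → κ) {T : Finset κ} (hf : Set.MapsTo f A T) :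
    #{p ∈ A ×ˢ A | f p.1 = g p.2} = ∑ c ∈ T, #{a ∈ A | f a = c} * #{a ∈ A | g a = c} := by
  rw [card_eq_sum_card_fiberwise (f := fun p ↦ f p.1) (t := T)
    fun p hp ↦ hf (mem_product.1 (mem_filter.1 hp).1).1]
  refine sum_congr rfl fun c _ ↦ ?_
  rw [← card_product, filter_filter, ← filter_product]
  congr 1
  refine filter_congr fun p _ ↦ ⟨?_, ?_⟩
  · rintro ⟨hfg, rfl⟩
    exact ⟨rfl, hfg.symm⟩
  · rintro ⟨rfl, hg⟩
    exact ⟨hg.symm, rfl⟩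

theorem two_mul_card_filter_eq_le {ι κ : Type*} [DecidableEq κ] (A : Finset ι) (f g : ι → κ) :
    2 * #{p ∈ A ×ˢ A | f p.1 = g p.2} ≤
      #{p ∈ A ×ˢ A | f p.1 = f p.2} + #{p ∈ A ×ˢ A | g p.1 = g p.2} := by
  have hf : Set.MapsTo f A ↑(A.image f ∪ A.image g) := fun a ha ↦
    mem_coe.2 (mem_union_left _ (mem_image_of_mem f ha))
  have hg : Set.MapsTo g A ↑(A.image f ∪ A.image g) := fun a ha ↦
    mem_coe.2 (mem_union_right _ (mem_image_of_mem g ha))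
  rw [card_filter_eq_eq_sum_mul g hf, card_filter_eq_eq_sum_mul f hf,
    card_filter_eq_eq_sum_mul g hg, mul_sum, ← sum_add_distrib]
  refine sum_le_sum fun c _ ↦ ?_
  nlinarith [sq_nonneg ((#{a ∈ A | f a = c} : ℤ) - #{a ∈ A | g a = c})]

theorem card_filter_sub_add_mem_le {G : Type*} [AddCommGroup G] (H : AddSubgroup G)
    [DecidablePred (· ∈ H)] (A : Finset G) (w : G) :
    #{p ∈ A ×ˢ A | p.1 - p.2 + w ∈ H} ≤ #{p ∈ A ×ˢ A | p.1 - p.2 ∈ H} := by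
  classical
  have mk_eq (a b : G) : (a : G ⧸ H) = b ↔ a - b ∈ H := by
    rw [← sub_eq_zero, ← QuotientAddGroup.mk_sub, QuotientAddGroup.eq_zero_iff]
  have h := two_mul_card_filter_eq_le A (fun a ↦ ((a + w : G) : G ⧸ H)) ((↑) : G → G ⧸ H)
  simp only [mk_eq, add_sub_add_right_eq_sub] at h
  simp only [add_sub_right_comm] at h
  omega

theorem sum_card_filter_sub_add_mem_le {G ι : Type*} [AddCommGroup G] (H : ι → AddSubgroup G)
    [∀ i, DecidablePred (· ∈ H i)] (T : Finset ι) (A : Finset G) (w : G) :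
    ∑ p ∈ A ×ˢ A, #{i ∈ T | p.1 - p.2 + w ∈ H i} ≤
      #A * #T + ∑ p ∈ A.offDiag, #{i ∈ T | p.1 - p.2 ∈ H i} := by
  classical
  have swap (w : G) : ∑ p ∈ A ×ˢ A, #{i ∈ T | p.1 - p.2 + w ∈ H i} =
      ∑ i ∈ T, #{p ∈ A ×ˢ A | p.1 - p.2 + w ∈ H i} := by
    simp only [card_filter]
    exact sum_comm
  have diag : ∑ p ∈ A.diag, #{i ∈ T | p.1 - p.2 ∈ H i} = #A * #T := by
    rw [sum_diag]
    simp only [sub_self, zero_mem, filter_true, sum_const, smul_eq_mul]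
  calc ∑ p ∈ A ×ˢ A, #{i ∈ T | p.1 - p.2 + w ∈ H i}
      = ∑ i ∈ T, #{p ∈ A ×ˢ A | p.1 - p.2 + w ∈ H i} := swap w
    _ ≤ ∑ i ∈ T, #{p ∈ A ×ˢ A | p.1 - p.2 ∈ H i} :=
        sum_le_sum fun i _ ↦ card_filter_sub_add_mem_le (H i) A w
    _ = ∑ p ∈ A ×ˢ A, #{i ∈ T | p.1 - p.2 ∈ H i} := by simpa only [add_zero] using (swap 0).symm
    _ = #A * #T + ∑ p ∈ A.offDiag, #{i ∈ T | p.1 - p.2 ∈ H i} := by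
        rw [← diag_union_offDiag, sum_union (disjoint_diag_offDiag A), diag]

end Collisions

section PrimeIdeals

open NumberField UniqueFactorizationMonoid

variable (K : Type*) [Field K] [NumberField K]

open Classical in
/-- The nonzero prime ideals of `𝓞 K` of norm at most `X`. -/
noncomputable def primeIdealsLE (X : ℕ) : Finset (Ideal (𝓞 K)) :=
  (Ideal.finite_setOfPred_absNorm_le (S := 𝓞 K) X).toFinset.filter Prime

/-- The Chebyshev function `θ_K(X) = ∑_{N P ≤ X} log N P`. -/
noncomputable def idealTheta (X : ℕ) : ℝ :=
  ∑ P ∈ primeIdealsLE K X, Real.log (Ideal.absNorm P)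

/-- The Chebyshev function `ψ_K(X) = ∑_{N P ^ k ≤ X} log N P`, with the sum over `k ≥ 1` carried
out. -/
noncomputable def idealPsi (X : ℕ) : ℝ :=
  ∑ P ∈ primeIdealsLE K X, Nat.log (Ideal.absNorm P) X * Real.log (Ideal.absNorm P)

variable {K}

theorem mem_primeIdealsLE {X : ℕ} {P : Ideal (𝓞 K)} :
    P ∈ primeIdealsLE K X ↔ Ideal.absNorm P ≤ X ∧ Prime P := by
  simp [primeIdealsLE]

theorem one_lt_absNorm_of_prime {P : Ideal (𝓞 K)} (hP : Prime P) : 1 < Ideal.absNorm P := by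
  have h0 : Ideal.absNorm P ≠ 0 := Ideal.absNorm_eq_zero_iff.not.2 hP.ne_zero
  have h1 : Ideal.absNorm P ≠ 1 :=
    Ideal.absNorm_eq_one_iff.not.2 (Ideal.isPrime_of_prime hP).ne_top
  omega

theorem primeIdealsLE_mono {X Y : ℕ} (h : X ≤ Y) : primeIdealsLE K X ⊆ primeIdealsLE K Y :=
  fun _ hP ↦ mem_primeIdealsLE.2 ⟨(mem_primeIdealsLE.1 hP).1.trans h, (mem_primeIdealsLE.1 hP).2⟩

theorem idealPsi_mono : Monotone (idealPsi K) := fun X Y h ↦ by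
  refine (Finset.sum_le_sum fun P _ ↦ ?_).trans
    (Finset.sum_le_sum_of_subset_of_nonneg (primeIdealsLE_mono h) fun P _ _ ↦ by positivity)
  gcongr

theorem prod_absNorm_le_absNorm_span {F : Finset (Ideal (𝓞 K))} (hF : ∀ P ∈ F, Prime P)
    {a : 𝓞 K} (ha : a ≠ 0) (haF : ∀ P ∈ F, a ∈ P) :
    ∏ P ∈ F, Ideal.absNorm P ≤ Ideal.absNorm (Ideal.span {a}) := by
  have h : ∏ P ∈ F, P ∣ Ideal.span {a} :=
    Finset.prod_primes_dvd _ hF fun P hP ↦ Ideal.dvd_span_singleton.2 (haF P hP)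
  rw [← map_prod]
  refine Nat.le_of_dvd (Nat.pos_of_ne_zero ?_) (map_dvd Ideal.absNorm h)
  rwa [Ne, Ideal.absNorm_eq_zero_iff, Ideal.span_singleton_eq_bot]

theorem exists_prime_notMem_of_log_absNorm_lt_idealTheta {a : 𝓞 K} (ha : a ≠ 0) {X : ℕ}
    (h : Real.log (Ideal.absNorm (Ideal.span {a})) < idealTheta K X) :
    ∃ P : Ideal (𝓞 K), Prime P ∧ a ∉ P ∧ Ideal.absNorm P ≤ X := by
  by_contra! hmem
  have hprime : ∀ P ∈ primeIdealsLE K X, Prime P := fun P hP ↦ (mem_primeIdealsLE.1 hP).2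
  have hpos : ∀ P ∈ primeIdealsLE K X, 0 < (Ideal.absNorm P : ℝ) := fun P hP ↦
    mod_cast one_pos.trans (one_lt_absNorm_of_prime (hprime P hP))
  have hprod := prod_absNorm_le_absNorm_span hprime ha fun P hP ↦ by
    by_contra haP
    exact (hmem P (hprime P hP) haP).not_ge (mem_primeIdealsLE.1 hP).1
  refine h.not_ge ?_
  rw [idealTheta, ← Real.log_prod fun P hP ↦ (hpos P hP).ne']
  exact Real.log_le_log (Finset.prod_pos hpos) (mod_cast hprod)

theorem card_primeIdealsLE_mul_log_two_le (X : ℕ) :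
    (primeIdealsLE K X).card * Real.log 2 ≤ Module.finrank ℚ K * X * Real.log X := by
  have hprime : ∀ P ∈ primeIdealsLE K X, Prime P := fun P hP ↦ (mem_primeIdealsLE.1 hP).2
  have hmem : ∀ P ∈ primeIdealsLE K X, ((X.factorial : ℕ) : 𝓞 K) ∈ P := fun P hP ↦ by
    obtain ⟨k, hk⟩ := Nat.dvd_factorial (one_pos.trans (one_lt_absNorm_of_prime (hprime P hP)))
      (mem_primeIdealsLE.1 hP).1
    rw [hk, Nat.cast_mul]
    exact P.mul_mem_right _ (Ideal.absNorm_mem P)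
  have hle : 2 ^ (primeIdealsLE K X).card ≤ (X ^ X) ^ Module.finrank ℚ K :=
    calc 2 ^ (primeIdealsLE K X).card ≤ ∏ P ∈ primeIdealsLE K X, Ideal.absNorm P :=
          Finset.pow_card_le_prod _ _ _ fun P hP ↦ one_lt_absNorm_of_prime (hprime P hP)
      _ ≤ Ideal.absNorm (Ideal.span {((X.factorial : ℕ) : 𝓞 K)}) :=
          prod_absNorm_le_absNorm_span hprime (mod_cast X.factorial_ne_zero) hmem
      _ = X.factorial ^ Module.finrank ℚ K := by
          rw [Ideal.absNorm_span_singleton, Algebra.norm_natCast, RingOfIntegers.rank,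
            Int.natAbs_pow, Int.natAbs_natCast]
      _ ≤ (X ^ X) ^ Module.finrank ℚ K := Nat.pow_le_pow_left X.factorial_le_pow _
  have hlog := Real.log_le_log (by positivity)
    (mod_cast hle : (2 : ℝ) ^ (primeIdealsLE K X).card ≤ ((X : ℝ) ^ X) ^ Module.finrank ℚ K)
  rw [Real.log_pow, Real.log_pow, Real.log_pow, ← mul_assoc] at hlog
  exact_mod_cast hlog

theorem idealPsi_le_idealTheta_add (X : ℕ) :
    idealPsi K X ≤ idealTheta K X + (primeIdealsLE K X.sqrt).card * Real.log X := by
  classical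
  rcases X.eq_zero_or_pos with rfl | hX
  · simpa [idealPsi, idealTheta] using Finset.sum_nonneg fun P _ ↦ Real.log_natCast_nonneg _
  have hterm : ∀ P ∈ primeIdealsLE K X,
      Nat.log (Ideal.absNorm P) X * Real.log (Ideal.absNorm P) ≤
        Real.log (Ideal.absNorm P) + if Ideal.absNorm P ≤ X.sqrt then Real.log X else 0 := by
    intro P hP
    have hN := one_lt_absNorm_of_prime (mem_primeIdealsLE.1 hP).2
    split_ifs with hsmall
    · have hpow : Nat.log (Ideal.absNorm P) X * Real.log (Ideal.absNorm P) ≤ Real.log X := by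
        rw [← Real.log_pow]
        exact Real.log_le_log (pow_pos (by positivity) _) (mod_cast Nat.pow_log_le_self _ hX.ne')
      exact hpow.trans (le_add_of_nonneg_left (Real.log_natCast_nonneg _))
    · have hlog : Nat.log (Ideal.absNorm P) X ≤ 1 :=
        Nat.lt_succ_iff.1 (Nat.log_lt_of_lt_pow hX.ne' (Nat.sqrt_lt'.1 (not_le.1 hsmall)))
      rw [add_zero]
      exact mul_le_of_le_one_left (Real.log_natCast_nonneg _) (mod_cast hlog)
  have hsmall : (primeIdealsLE K X).filter (Ideal.absNorm · ≤ X.sqrt) = primeIdealsLE K X.sqrt := by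
    ext P
    simp only [Finset.mem_filter, mem_primeIdealsLE]
    have := X.sqrt_le_self
    constructor <;> intro h <;> refine ⟨?_, ?_⟩ <;> grind
  refine (Finset.sum_le_sum hterm).trans_eq ?_
  rw [Finset.sum_add_distrib, ← Finset.sum_filter, Finset.sum_const, nsmul_eq_mul, hsmall,
    idealTheta]

theorem isLittleO_sqrt_mul_log_sq :
    (fun x : ℝ ↦ √x * Real.log x ^ 2) =o[Filter.atTop] fun x : ℝ ↦ x := by
  have h := (Asymptotics.isBigO_refl (fun x : ℝ ↦ √x) Filter.atTop).mul_isLittleO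
    (isLittleO_log_rpow_rpow_atTop 2 (one_half_pos (α := ℝ)))
  refine h.congr' (.of_forall fun x ↦ by simp only [Real.rpow_two]) ?_
  filter_upwards [Filter.eventually_ge_atTop 0] with x hx
  rw [← Real.sqrt_eq_rpow, Real.mul_self_sqrt hx]

theorem eventually_idealPsi_le_idealTheta_add {ε : ℝ} (hε : 0 < ε) :
    ∀ᶠ X : ℕ in Filter.atTop, idealPsi K X ≤ idealTheta K X + ε * X := by
  have hlittle := ((isLittleO_sqrt_mul_log_sq.comp_tendsto
    tendsto_natCast_atTop_atTop).const_mul_left (Module.finrank ℚ K / Real.log 2)).def hε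
  filter_upwards [hlittle, Filter.eventually_gt_atTop 0] with X hX hX0
  simp only [Function.comp_apply, Real.norm_natCast] at hX
  have hsqrt : Real.log X.sqrt ≤ Real.log X :=
    Real.log_le_log (mod_cast Nat.sqrt_pos.2 hX0) (mod_cast X.sqrt_le_self)
  calc idealPsi K X ≤ idealTheta K X + (primeIdealsLE K X.sqrt).card * Real.log X :=
        idealPsi_le_idealTheta_add X
    _ ≤ idealTheta K X + Module.finrank ℚ K * X.sqrt * Real.log X.sqrt / Real.log 2 *
          Real.log X := by
        gcongr
        exact (le_div_iff₀ (Real.log_pos one_lt_two)).2 (card_primeIdealsLE_mul_log_two_le _)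
    _ ≤ idealTheta K X + Module.finrank ℚ K * √X * Real.log X / Real.log 2 * Real.log X := by
        gcongr
        exact Real.nat_sqrt_le_real_sqrt
    _ = idealTheta K X + Module.finrank ℚ K / Real.log 2 * (√X * Real.log X ^ 2) := by ring
    _ ≤ idealTheta K X + ε * X := add_le_add_right ((le_abs_self _).trans hX) _

theorem log_absNorm_eq_sum {I : Ideal (𝓞 K)} (hI : I ≠ ⊥) {X : ℕ} (hX : Ideal.absNorm I ≤ X) :
    Real.log (Ideal.absNorm I) = ∑ P ∈ primeIdealsLE K X,
      (normalizedFactors I).count P * Real.log (Ideal.absNorm P) := by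
  have hsub : (normalizedFactors I).toFinset ⊆ primeIdealsLE K X := fun P hP ↦ by
    rw [Multiset.mem_toFinset] at hP
    refine mem_primeIdealsLE.2 ⟨le_trans ?_ hX, prime_of_normalized_factor P hP⟩
    exact Nat.le_of_dvd (Nat.pos_of_ne_zero (Ideal.absNorm_eq_zero_iff.not.2 hI))
      (map_dvd Ideal.absNorm (dvd_of_mem_normalizedFactors hP))
  have hne : ∀ P ∈ primeIdealsLE K X,
      (Ideal.absNorm P : ℝ) ^ (normalizedFactors I).count P ≠ 0 := fun P hP ↦
    pow_ne_zero _ (mod_cast (one_pos.trans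
      (one_lt_absNorm_of_prime (mem_primeIdealsLE.1 hP).2)).ne')
  conv_lhs => rw [← Ideal.prod_normalizedFactors_eq_self hI,
    Finset.prod_multiset_count_of_subset _ _ hsub, map_prod]
  simp only [map_pow, Nat.cast_prod, Nat.cast_pow]
  rw [Real.log_prod hne]
  simp only [Real.log_pow]

theorem count_normalizedFactors_eq_card [∀ I : Ideal (𝓞 K), DecidablePred (· ∈ I)]
    {P : Ideal (𝓞 K)} (hP : Prime P) {a : 𝓞 K} (ha : a ≠ 0) {X : ℕ}
    (hX : Ideal.absNorm (Ideal.span {a}) ≤ X) :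
    (normalizedFactors (Ideal.span {a})).count P =
      ((Finset.Icc 1 (Nat.log (Ideal.absNorm P) X)).filter (a ∈ P ^ ·)).card := by
  have hI : Ideal.span {a} ≠ ⊥ := Ideal.span_singleton_eq_bot.not.2 ha
  have hN0 : Ideal.absNorm (Ideal.span {a}) ≠ 0 := Ideal.absNorm_eq_zero_iff.not.2 hI
  have hN := one_lt_absNorm_of_prime hP
  have hmem (k : ℕ) : a ∈ P ^ k ↔ k ≤ (normalizedFactors (Ideal.span {a})).count P := by
    rw [← Ideal.dvd_span_singleton, pow_dvd_iff_le_emultiplicity,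
      emultiplicity_eq_count_normalizedFactors hP.irreducible hI, normalize_eq, Nat.cast_le]
  have hcount : (normalizedFactors (Ideal.span {a})).count P ≤ Nat.log (Ideal.absNorm P) X := by
    refine Nat.le_log_of_pow_le hN (le_trans ?_ hX)
    rw [← map_pow]
    exact Nat.le_of_dvd (Nat.pos_of_ne_zero hN0)
      (map_dvd Ideal.absNorm (Ideal.dvd_span_singleton.2 ((hmem _).2 le_rfl)))
  simp only [hmem]
  rw [show (Finset.Icc 1 (Nat.log (Ideal.absNorm P) X)).filter
      (· ≤ (normalizedFactors (Ideal.span {a})).count P) =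
        Finset.Icc 1 ((normalizedFactors (Ideal.span {a})).count P) by ext k; grind,
    Nat.card_Icc, Nat.add_sub_cancel]

open Classical in
theorem sum_log_absNorm_sub_add_le {A : Finset (𝓞 K)} {w : 𝓞 K} {Q : ℕ}
    (hw : ∀ α ∈ A, ∀ β ∈ A, α - β + w ≠ 0)
    (hQw : ∀ α ∈ A, ∀ β ∈ A, Ideal.absNorm (Ideal.span {α - β + w}) ≤ Q)
    (hQ : ∀ α ∈ A, ∀ β ∈ A, Ideal.absNorm (Ideal.span {α - β}) ≤ Q) :
    ∑ p ∈ A ×ˢ A, Real.log (Ideal.absNorm (Ideal.span {p.1 - p.2 + w})) ≤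
      A.card * idealPsi K Q +
        ∑ p ∈ A.offDiag, Real.log (Ideal.absNorm (Ideal.span {p.1 - p.2})) := by
  let v (P : Ideal (𝓞 K)) (a : 𝓞 K) : ℕ :=
    ((Finset.Icc 1 (Nat.log (Ideal.absNorm P) Q)).filter (a ∈ P ^ ·)).card
  have hlog {a : 𝓞 K} (ha : a ≠ 0) (haQ : Ideal.absNorm (Ideal.span {a}) ≤ Q) :
      Real.log (Ideal.absNorm (Ideal.span {a})) =
        ∑ P ∈ primeIdealsLE K Q, v P a * Real.log (Ideal.absNorm P) := by
    rw [log_absNorm_eq_sum (Ideal.span_singleton_eq_bot.not.2 ha) haQ]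
    refine Finset.sum_congr rfl fun P hP ↦ ?_
    rw [count_normalizedFactors_eq_card (mem_primeIdealsLE.1 hP).2 ha haQ]
  have hv (P : Ideal (𝓞 K)) : ∑ p ∈ A ×ˢ A, v P (p.1 - p.2 + w) ≤
      A.card * Nat.log (Ideal.absNorm P) Q + ∑ p ∈ A.offDiag, v P (p.1 - p.2) := by
    simpa [v] using sum_card_filter_sub_add_mem_le (fun k ↦ Submodule.toAddSubgroup (P ^ k))
      (Finset.Icc 1 (Nat.log (Ideal.absNorm P) Q)) A w
  calc ∑ p ∈ A ×ˢ A, Real.log (Ideal.absNorm (Ideal.span {p.1 - p.2 + w}))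
      = ∑ p ∈ A ×ˢ A, ∑ P ∈ primeIdealsLE K Q, v P (p.1 - p.2 + w) * Real.log (Ideal.absNorm P) :=
        Finset.sum_congr rfl fun p hp ↦ by
          obtain ⟨hα, hβ⟩ := Finset.mem_product.1 hp
          exact hlog (hw _ hα _ hβ) (hQw _ hα _ hβ)
    _ = ∑ P ∈ primeIdealsLE K Q, (∑ p ∈ A ×ˢ A, v P (p.1 - p.2 + w) : ℕ) *
          Real.log (Ideal.absNorm P) := by
        rw [Finset.sum_comm]
        simp only [Nat.cast_sum, Finset.sum_mul]
    _ ≤ ∑ P ∈ primeIdealsLE K Q, (A.card * Nat.log (Ideal.absNorm P) Q +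
          ∑ p ∈ A.offDiag, v P (p.1 - p.2) : ℕ) * Real.log (Ideal.absNorm P) :=
        Finset.sum_le_sum fun P _ ↦ mul_le_mul_of_nonneg_right (mod_cast hv P)
          (Real.log_natCast_nonneg _)
    _ = A.card * idealPsi K Q + ∑ p ∈ A.offDiag, ∑ P ∈ primeIdealsLE K Q,
          v P (p.1 - p.2) * Real.log (Ideal.absNorm P) := by
        rw [Finset.sum_comm]
        simp only [idealPsi, Nat.cast_add, Nat.cast_mul, Nat.cast_sum, add_mul,
          Finset.sum_add_distrib, Finset.sum_mul, Finset.mul_sum, mul_assoc]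
    _ = _ := by
        congr 1
        refine Finset.sum_congr rfl fun p hp ↦ ?_
        obtain ⟨hα, hβ, hne⟩ := Finset.mem_offDiag.1 hp
        exact (hlog (sub_ne_zero.2 hne) (hQ _ hα _ hβ)).symm

theorem absNorm_span_eq_prod_norm (a : 𝓞 K) :
    (Ideal.absNorm (Ideal.span {a}) : ℝ) = ∏ φ : K →+* ℂ, ‖φ a‖ := by
  have hnorm : ∏ φ : K →+* ℂ, φ a = (Algebra.norm ℤ a : ℤ) := by
    rw [← (RingHom.equivRatAlgHom (R := K) (S := ℂ)).symm.prod_comp]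
    refine (Algebra.norm_eq_prod_embeddings ℚ ℂ (a : K)).symm.trans ?_
    rw [← Algebra.coe_norm_int, eq_ratCast, Rat.cast_intCast]
  rw [← norm_prod, hnorm, Complex.norm_intCast, Ideal.absNorm_span_singleton, Nat.cast_natAbs,
    Int.cast_abs]

theorem absNorm_span_le_pow {a : 𝓞 K} {B : ℝ} (h : ∀ φ : K →+* ℂ, ‖φ a‖ ≤ B) :
    (Ideal.absNorm (Ideal.span {a}) : ℝ) ≤ B ^ Module.finrank ℚ K := by
  rw [absNorm_span_eq_prod_norm, ← Embeddings.card K ℂ, ← Finset.card_univ, ← Finset.prod_const]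
  exact Finset.prod_le_prod (fun _ _ ↦ norm_nonneg _) fun φ _ ↦ h φ

theorem log_absNorm_span_le {a : 𝓞 K} {B : ℝ} (hB : 1 ≤ B) (h : ∀ φ : K →+* ℂ, ‖φ a‖ ≤ B) :
    Real.log (Ideal.absNorm (Ideal.span {a})) ≤ Module.finrank ℚ K * Real.log B := by
  rw [← Real.log_pow]
  rcases Nat.eq_zero_or_pos (Ideal.absNorm (Ideal.span {a})) with h0 | hpos
  · rw [h0, Nat.cast_zero, Real.log_zero]
    exact Real.log_nonneg (one_le_pow₀ hB)
  · exact Real.log_le_log (mod_cast hpos) (absNorm_span_le_pow h)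

theorem pow_le_absNorm_span {a : 𝓞 K} {B : ℝ} (hB : 0 ≤ B) (h : ∀ φ : K →+* ℂ, B ≤ ‖φ a‖) :
    B ^ Module.finrank ℚ K ≤ Ideal.absNorm (Ideal.span {a}) := by
  rw [absNorm_span_eq_prod_norm, ← Embeddings.card K ℂ, ← Finset.card_univ, ← Finset.prod_const]
  exact Finset.prod_le_prod (fun _ _ ↦ hB) fun φ _ ↦ h φ

theorem card_mul_log_div_le_idealPsi {A : Finset (𝓞 K)} {w : 𝓞 K} {Q : ℕ} {L U : ℝ}
    (hL : 0 < L) (hU : 1 ≤ U) (hUQ : U ≤ Q)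
    (hlow : ∀ α ∈ A, ∀ β ∈ A, L ≤ Ideal.absNorm (Ideal.span {α - β + w}))
    (hshift : ∀ α ∈ A, ∀ β ∈ A, Ideal.absNorm (Ideal.span {α - β + w}) ≤ Q)
    (hdiff : ∀ α ∈ A, ∀ β ∈ A, (Ideal.absNorm (Ideal.span {α - β}) : ℝ) ≤ U) :
    A.card * Real.log (L / U) ≤ idealPsi K Q := by
  classical
  rcases A.eq_empty_or_nonempty with rfl | hA
  · rw [Finset.card_empty, Nat.cast_zero, zero_mul]
    exact Finset.sum_nonneg fun P _ ↦ mul_nonneg (Nat.cast_nonneg _) (Real.log_natCast_nonneg _)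
  have hne : ∀ α ∈ A, ∀ β ∈ A, α - β + w ≠ 0 := fun α hα β hβ h0 ↦ by
    have := hL.trans_le (hlow α hα β hβ)
    simp [h0] at this
  have hlogU : ∀ p ∈ A.offDiag, Real.log (Ideal.absNorm (Ideal.span {p.1 - p.2})) ≤ Real.log U := by
    rintro ⟨α, β⟩ hp
    obtain ⟨hα, hβ, hαβ⟩ := Finset.mem_offDiag.1 hp
    refine Real.log_le_log (Nat.cast_pos.2 (Nat.pos_of_ne_zero ?_)) (hdiff α hα β hβ)
    rwa [Ne, Ideal.absNorm_eq_zero_iff, Ideal.span_singleton_eq_bot, sub_eq_zero]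
  have hoff : (A.offDiag.card : ℝ) ≤ A.card * A.card := by
    rw [Finset.offDiag_card]
    exact_mod_cast Nat.sub_le _ _
  refine le_of_mul_le_mul_left ?_ (Nat.cast_pos.2 hA.card_pos : (0 : ℝ) < A.card)
  rw [Real.log_div hL.ne' (by positivity)]
  suffices A.card * A.card * Real.log L ≤
    A.card * idealPsi K Q + A.card * A.card * Real.log U by linarith
  calc A.card * A.card * Real.log L = ∑ _p ∈ A ×ˢ A, Real.log L := by
        rw [Finset.sum_const, Finset.card_product, nsmul_eq_mul, Nat.cast_mul]
    _ ≤ ∑ p ∈ A ×ˢ A, Real.log (Ideal.absNorm (Ideal.span {p.1 - p.2 + w})) :=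
        Finset.sum_le_sum fun p hp ↦ Real.log_le_log hL <|
          hlow _ (Finset.mem_product.1 hp).1 _ (Finset.mem_product.1 hp).2
    _ ≤ A.card * idealPsi K Q +
          ∑ p ∈ A.offDiag, Real.log (Ideal.absNorm (Ideal.span {p.1 - p.2})) :=
        sum_log_absNorm_sub_add_le hne hshift fun α hα β hβ ↦
          Nat.cast_le.1 ((hdiff α hα β hβ).trans hUQ)
    _ ≤ A.card * idealPsi K Q + A.offDiag.card * Real.log U := by
        rw [← nsmul_eq_mul A.offDiag.card]
        gcongr
        exact Finset.sum_le_card_nsmul _ _ _ hlogU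
    _ ≤ A.card * idealPsi K Q + A.card * A.card * Real.log U := by
        gcongr
        exact Real.log_nonneg hU

theorem card_le_idealPsi {A : Finset (𝓞 K)} {R : ℕ} (hR : 0 < R)
    (hA : ∀ α ∈ A, ∀ β ∈ A, ∀ φ : K →+* ℂ, ‖φ (α - β : 𝓞 K)‖ ≤ R) :
    A.card ≤ idealPsi K ((5 * R) ^ Module.finrank ℚ K) := by
  set d := Module.finrank ℚ K
  obtain ⟨w, hw⟩ : ∃ w : 𝓞 K, ∀ φ : K →+* ℂ, ‖φ w‖ = 4 * R :=
    ⟨(4 * R : ℕ), fun φ ↦ by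
      rw [show (((4 * R : ℕ) : 𝓞 K) : K) = (4 * R : ℕ) from map_natCast (algebraMap (𝓞 K) K) _,
        map_natCast, Complex.norm_natCast, Nat.cast_mul, Nat.cast_ofNat]⟩
  have hadd (a : 𝓞 K) (φ : K →+* ℂ) : φ (a + w : 𝓞 K) = φ w + φ a := by
    rw [add_comm (φ w)]
    exact map_add φ _ _
  have hR' : (1 : ℝ) ≤ R := mod_cast hR
  -- conjugates of `α - β + w` lie between `3 R` and `5 R`, those of `α - β` below `R`, and `e < 3`
  have hlog : 1 ≤ Real.log ((3 * R) ^ d / R ^ d) := by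
    rw [mul_pow, mul_div_cancel_right₀ _ (by positivity), Real.log_pow]
    exact one_le_mul_of_one_le_of_one_le (mod_cast Module.finrank_pos)
      ((Real.le_log_iff_exp_le three_pos).2 Real.exp_one_lt_three.le)
  refine (le_mul_of_one_le_right (Nat.cast_nonneg _) hlog).trans
    (card_mul_log_div_le_idealPsi (w := w) (by positivity) (one_le_pow₀ hR') ?_ ?_ ?_ ?_)
  · push_cast
    gcongr
    linarith
  · exact fun α hα β hβ ↦ pow_le_absNorm_span (by positivity) fun φ ↦ by
      rw [hadd]
      linarith [norm_sub_le_norm_add (φ w) (φ (α - β : 𝓞 K)), hw φ, hA α hα β hβ φ]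
  · exact fun α hα β hβ ↦ by
      have h := absNorm_span_le_pow (a := α - β + w) (B := 5 * R) fun φ ↦ by
        rw [hadd]
        linarith [norm_add_le (φ w) (φ (α - β : 𝓞 K)), hw φ, hA α hα β hβ φ]
      exact_mod_cast h
  · exact fun α hα β hβ ↦ absNorm_span_le_pow (hA α hα β hβ)

variable (K) in
theorem exists_finset_card_eq_pow_norm_sub_le :
    ∃ H : ℕ, 0 < H ∧ ∀ y : ℕ, ∃ A : Finset (𝓞 K), A.card = y ^ Module.finrank ℚ K ∧
      ∀ α ∈ A, ∀ β ∈ A, ∀ φ : K →+* ℂ, ‖φ (α - β : 𝓞 K)‖ ≤ H * y := by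
  classical
  let b := RingOfIntegers.basis K
  refine ⟨⌈∑ i, house (b i : K)⌉₊ + 1, Nat.succ_pos _, fun y ↦
    ⟨(Fintype.piFinset fun _ ↦ Finset.Ico 0 (y : ℤ)).map b.equivFun.symm.toEquiv.toEmbedding,
      ?_, ?_⟩⟩
  · rw [Finset.card_map, Fintype.card_piFinset, Finset.prod_const, Int.card_Ico, sub_zero,
      Int.toNat_natCast, Finset.card_univ, ← Module.finrank_eq_card_chooseBasisIndex,
      RingOfIntegers.rank]
  · simp only [Finset.forall_mem_map, Fintype.mem_piFinset, Finset.mem_Ico]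
    intro u hu v hv φ
    have hcoord (i) : ‖((u - v) i : ℂ)‖ ≤ y := by
      rw [Complex.norm_intCast]
      have := hu i
      have := hv i
      exact_mod_cast abs_le.2 ⟨by grind [Pi.sub_apply], by grind [Pi.sub_apply]⟩
    calc ‖φ (b.equivFun.symm u - b.equivFun.symm v : 𝓞 K)‖
        = ‖∑ i, ((u - v) i : ℂ) * φ (b i)‖ := by
          rw [← map_sub, Module.Basis.equivFun_symm_apply]
          simp
      _ ≤ ∑ i, y * house (b i : K) := norm_sum_le_of_le _ fun i _ ↦ by
          rw [norm_mul]
          gcongr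
          exacts [hcoord i, norm_embedding_le_house _ φ]
      _ ≤ (⌈∑ i, house (b i : K)⌉₊ + 1 : ℕ) * y := by
          rw [← Finset.mul_sum, mul_comm]
          gcongr
          exact (Nat.le_ceil _).trans (mod_cast Nat.le_succ _)

theorem exists_le_pow_le_mul {d X : ℕ} (hd : d ≠ 0) (hX : 0 < X) :
    ∃ y, X ≤ y ^ d ∧ y ^ d ≤ 2 ^ d * X := by
  have h2 : 1 < 2 ^ d := Nat.one_lt_two_pow hd
  refine ⟨2 ^ Nat.clog (2 ^ d) X, ?_, ?_⟩ <;> rw [← pow_mul, mul_comm, pow_mul]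
  · exact Nat.le_pow_clog h2 X
  · rcases Nat.eq_or_lt_of_le hX with rfl | hX
    · simp [Nat.one_le_two_pow]
    · have h := Nat.pow_pred_clog_lt_self h2 hX
      rw [← Nat.sub_add_cancel (Nat.clog_pos h2 hX), pow_succ']
      gcongr
      exact h.le

variable (K) in
theorem exists_le_idealPsi_mul :
    ∃ B : ℕ, 0 < B ∧ ∀ X : ℕ, 0 < X → (X : ℝ) ≤ idealPsi K (B * X) := by
  obtain ⟨H, hH, hbox⟩ := exists_finset_card_eq_pow_norm_sub_le K
  set d := Module.finrank ℚ K
  refine ⟨(10 * H) ^ d, by positivity, fun X hX ↦ ?_⟩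
  obtain ⟨y, hXy, hyX⟩ := exists_le_pow_le_mul (Module.finrank_pos (R := ℚ) (M := K)).ne' hX
  have hy : 0 < y := Nat.pos_of_ne_zero fun hy ↦ by
    rw [hy, zero_pow Module.finrank_pos.ne'] at hXy
    exact hX.not_ge hXy
  obtain ⟨A, hcard, hA⟩ := hbox y
  calc (X : ℝ) ≤ A.card := mod_cast hcard ▸ hXy
    _ ≤ idealPsi K ((5 * (H * y)) ^ d) := card_le_idealPsi (by positivity) (mod_cast hA)
    _ ≤ idealPsi K ((10 * H) ^ d * X) := idealPsi_mono <|
      calc (5 * (H * y)) ^ d = (5 * H) ^ d * y ^ d := by rw [← mul_assoc, mul_pow]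
        _ ≤ (5 * H) ^ d * (2 ^ d * X) := Nat.mul_le_mul_left _ hyX
        _ = (10 * H) ^ d * X := by rw [← mul_assoc, ← mul_pow]; ring

variable (K) in
theorem exists_le_idealTheta_mul :
    ∃ M : ℕ, 0 < M ∧ ∀ X : ℕ, 0 < X → (X : ℝ) ≤ idealTheta K (M * X) := by
  obtain ⟨B, hB, hpsi⟩ := exists_le_idealPsi_mul K
  have hε : 0 < 1 / (2 * B : ℝ) := by positivity
  obtain ⟨X₀, hX₀⟩ := Filter.eventually_atTop.1 (eventually_idealPsi_le_idealTheta_add (K := K) hε)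
  refine ⟨B * (X₀ + 2), by positivity, fun X hX ↦ ?_⟩
  have hlarge : X₀ ≤ B * ((X₀ + 2) * X) :=
    calc X₀ ≤ 1 * ((X₀ + 2) * 1) := by omega
      _ ≤ B * ((X₀ + 2) * X) := by gcongr <;> assumption
  have hpsi_le_theta := hX₀ _ hlarge
  have hle_psi := hpsi ((X₀ + 2) * X) (by positivity)
  have herror : 1 / (2 * B : ℝ) * (B * ((X₀ + 2) * X) : ℕ) = ((X₀ + 2) * X : ℕ) / 2 := by
    push_cast
    field_simp
  rw [mul_assoc]
  have htwo_mul_le : (2 * X : ℝ) ≤ ((X₀ + 2) * X : ℕ) := mod_cast Nat.mul_le_mul_right X (by omega)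
  linarith

variable (K) in
theorem exists_prime_notMem_absNorm_le : ∃ M : ℕ, 0 < M ∧ ∀ a : 𝓞 K, a ≠ 0 → ∀ X : ℕ,
    Real.log (Ideal.absNorm (Ideal.span {a})) < X →
      ∃ P : Ideal (𝓞 K), Prime P ∧ a ∉ P ∧ Ideal.absNorm P ≤ M * X := by
  obtain ⟨M, hM, htheta⟩ := exists_le_idealTheta_mul K
  refine ⟨M, hM, fun a ha X hX ↦
    exists_prime_notMem_of_log_absNorm_lt_idealTheta ha (hX.trans_le (htheta X ?_))⟩
  exact_mod_cast (Real.log_natCast_nonneg _).trans_lt hX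

end PrimeIdeals

section WordGrowth

variable {Γ : Type*} [Group Γ] {X : Finset Γ}

theorem inBall.eq_one {γ : Γ} (h : inBall X 0 γ) : γ = 1 := by
  obtain ⟨l, -, hl, rfl⟩ := h
  rw [List.length_eq_zero_iff.1 (Nat.le_zero.1 hl), List.prod_nil]

theorem inBall.induction {p : ℕ → Γ → Prop} (one : ∀ n, p n 1)
    (mul : ∀ n x γ, x ∈ X ∨ x⁻¹ ∈ X → p n γ → p (n + 1) (x * γ)) {n : ℕ} {γ : Γ}
    (h : inBall X n γ) : p n γ := by
  obtain ⟨l, hl, hn, rfl⟩ := h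
  induction l generalizing n with
  | nil => exact one n
  | cons x l ih =>
    obtain ⟨n, rfl⟩ := Nat.exists_eq_add_of_lt (Nat.zero_lt_of_lt hn)
    rw [zero_add, List.prod_cons] at *
    exact mul n x _ (hl x List.mem_cons_self)
      (ih (fun y hy ↦ hl y (List.mem_cons_of_mem x hy)) (Nat.le_of_succ_le_succ hn))

theorem finite_setOf_mem_or_inv_mem (X : Finset Γ) : {x | x ∈ X ∨ x⁻¹ ∈ X}.Finite :=
  X.finite_toSet.union X.finite_toSet.inv

theorem exists_norm_le_mul_pow {R : Type*} [SeminormedRing R] (X : Finset Γ) (r : Γ →* R) :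
    ∃ B : ℝ, 0 ≤ B ∧ ∀ n γ, inBall X n γ → ‖r γ‖ ≤ ‖(1 : R)‖ * B ^ n := by
  obtain ⟨B, hB⟩ := ((finite_setOf_mem_or_inv_mem X).image (‖r ·‖)).bddAbove
  have hgen : ∀ x, x ∈ X ∨ x⁻¹ ∈ X → ‖r x‖ ≤ max 1 B := fun x hx ↦
    (hB (Set.mem_image_of_mem _ hx)).trans (le_max_right 1 B)
  refine ⟨max 1 B, by positivity, fun n γ h ↦
    h.induction (p := fun n γ ↦ ‖r γ‖ ≤ ‖(1 : R)‖ * max 1 B ^ n) (fun n ↦ ?_) fun n x γ hx hγ ↦ ?_⟩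
  · rw [map_one]
    exact le_mul_of_one_le_right (norm_nonneg _) (one_le_pow₀ (le_max_left 1 B))
  · calc ‖r (x * γ)‖ ≤ ‖r x‖ * ‖r γ‖ := by
          rw [map_mul]
          exact norm_mul_le _ _
      _ ≤ max 1 B * (‖(1 : R)‖ * max 1 B ^ n) := by
          gcongr
          exact hgen x hx
      _ = ‖(1 : R)‖ * max 1 B ^ (n + 1) := by ring

theorem inBall.pow_smul_mem {R E : Type*} [CommSemiring R] [Semiring E] [Algebra R E]
    {S : Subalgebra R E} {r : Γ →* E} {D : R} (hD : ∀ x, x ∈ X ∨ x⁻¹ ∈ X → D • r x ∈ S)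
    {n : ℕ} {γ : Γ} (h : inBall X n γ) : D ^ n • r γ ∈ S := by
  refine h.induction (p := fun n γ ↦ D ^ n • r γ ∈ S) (fun n ↦ ?_) fun n x γ hx hγ ↦ ?_
  · rw [map_one]
    exact S.smul_mem S.one_mem _
  · rw [map_mul, pow_succ', ← smul_mul_smul_comm]
    exact S.mul_mem (hD x hx) hγ

end WordGrowth

section FiniteQuotients

open Matrix

theorem not_isConj_mk_ker {Γ G : Type*} [Group Γ] [Group G] {f : Γ →* G} {γ η : Γ}
    (h : ¬ IsConj (f γ) (f η)) :
    ¬ IsConj (QuotientGroup.mk' f.ker γ) (QuotientGroup.mk' f.ker η) :=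
  fun hconj ↦ h ((QuotientGroup.kerLift f).map_isConj hconj)

theorem trace_specialLinearGroup_map {n R S : Type*} [Fintype n] [DecidableEq n] [CommRing R]
    [CommRing S] (f : R →+* S) (A : SpecialLinearGroup n R) :
    trace (SpecialLinearGroup.map f A : Matrix n n S) = f (trace (A : Matrix n n R)) :=
  (AddMonoidHom.map_trace f _).symm

theorem trace_eq_of_isConj {n R : Type*} [Fintype n] [DecidableEq n] [CommRing R]
    {A B : SpecialLinearGroup n R} (h : IsConj A B) :
    trace (A : Matrix n n R) = trace (B : Matrix n n R) := by
  obtain ⟨g, hg⟩ := isConj_iff.1 h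
  rw [← hg, Matrix.SpecialLinearGroup.coe_mul, trace_mul_comm,
    ← Matrix.SpecialLinearGroup.coe_mul, inv_mul_cancel_left]

theorem card_specialLinearGroup_mul_card_units (n R : Type*) [Fintype n] [DecidableEq n]
    [Nonempty n] [CommRing R] :
    Nat.card (SpecialLinearGroup n R) * Nat.card Rˣ = Nat.card (GL n R) := by
  have hker : (SpecialLinearGroup.toGL : SpecialLinearGroup n R →* GL n R).range =
      (GeneralLinearGroup.det : GL n R →* Rˣ).ker :=
    SetLike.coe_injective (SpecialLinearGroup.range_toGL (A := R))
  rw [← Subgroup.card_mul_index (GeneralLinearGroup.det : GL n R →* Rˣ).ker, Subgroup.index_ker,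
    MonoidHom.range_eq_top.2 GeneralLinearGroup.det_surjective, Subgroup.card_top, ← hker,
    Nat.card_congr (MonoidHom.ofInjective SpecialLinearGroup.toGL_injective).toEquiv]

theorem card_specialLinearGroup_le (m : ℕ) (F : Type*) [Field F] [Finite F] :
    Nat.card (SpecialLinearGroup (Fin m) F) ≤ Nat.card F ^ (m ^ 2 - 1) := by
  rcases m with - | k
  · simp
  have := Fintype.ofFinite F
  set q := Nat.card F
  have hq1 : 1 < q := Finite.one_lt_card
  have hexp : (k + 1) ^ 2 - 1 = (k + 1) * k + k := by
    rw [← Nat.add_sub_cancel (n := (k + 1) * k + k) (m := 1)]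
    congr 1
    ring
  refine Nat.le_of_mul_le_mul_right ?_ (Nat.sub_pos_of_lt hq1)
  calc Nat.card (SpecialLinearGroup (Fin (k + 1)) F) * (q - 1)
      = Nat.card (GL (Fin (k + 1)) F) := by
        rw [← card_specialLinearGroup_mul_card_units, Nat.card_units]
    _ = (∏ i : Fin k, (q ^ (k + 1) - q ^ (i : ℕ))) * (q ^ (k + 1) - q ^ k) := by
        rw [card_GL_field, ← Nat.card_eq_fintype_card, Fin.prod_univ_castSucc]
        rfl
    _ ≤ (q ^ (k + 1)) ^ k * (q ^ (k + 1) - q ^ k) := by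
        gcongr
        exact (Finset.prod_le_pow_card _ _ _ fun _ _ ↦ Nat.sub_le _ _).trans_eq (by simp)
    _ = q ^ ((k + 1) ^ 2 - 1) * (q - 1) := by
        rw [hexp, pow_add _ _ k, pow_mul, mul_assoc, Nat.mul_sub (q ^ k), ← pow_succ, mul_one]

end FiniteQuotients

section Denominators

open Matrix

variable {n R K : Type*} [Fintype n] [DecidableEq n] [CommRing R] [Field K] [Algebra R K]

variable (n R K) in
/-- The `n × n` matrices over `K` with all entries in the image of `R`. -/
def integralMatrices : Subalgebra R (Matrix n n K) :=
  (Algebra.ofId R K).mapMatrix.range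

theorem mem_integralMatrices {A : Matrix n n K} :
    A ∈ integralMatrices n R K ↔ ∀ i j, IsLocalization.IsInteger R (A i j) := by
  constructor
  · rintro ⟨M, rfl⟩ i j
    exact ⟨M i j, rfl⟩
  · intro h
    choose M hM using h
    exact ⟨Matrix.of M, Matrix.ext hM⟩

theorem exists_algebraMap_eq_trace {A : Matrix n n K} (hA : A ∈ integralMatrices n R K) :
    ∃ b : R, algebraMap R K b = trace A := by
  obtain ⟨M, rfl⟩ := hA
  exact ⟨trace M, AddMonoidHom.map_trace (algebraMap R K) M⟩

theorem exists_smul_mem_integralMatrices [IsFractionRing R K] {T : Set (Matrix n n K)}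
    (hT : T.Finite) : ∃ D ∈ nonZeroDivisors R, ∀ A ∈ T, D • A ∈ integralMatrices n R K := by
  have := hT.to_subtype
  obtain ⟨D, hD⟩ := IsLocalization.exist_integer_multiples_of_finite (nonZeroDivisors R)
    fun p : T × n × n ↦ (p.1 : Matrix n n K) p.2.1 p.2.2
  exact ⟨D, D.2, fun A hA ↦ mem_integralMatrices.2 fun i j ↦ hD (⟨A, hA⟩, i, j)⟩

theorem exists_smul_generators_mem_and_trace_sub [IsFractionRing R K] {Γ : Type*} [Group Γ]
    (X : Finset Γ) (ρ : Γ →* SpecialLinearGroup n K) :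
    ∃ D ∈ nonZeroDivisors R, (∀ x ∈ X, D • (ρ x : Matrix n n K) ∈ integralMatrices n R K) ∧
      ∀ N γ η, inBall X N γ → inBall X N η → ∃ b : R,
        algebraMap R K b = D ^ N • (trace (ρ γ : Matrix n n K) - trace (ρ η : Matrix n n K)) := by
  let r : Γ →* Matrix n n K := SpecialLinearGroup.coeMonoidHom.comp ρ
  obtain ⟨D, hD0, hD⟩ := exists_smul_mem_integralMatrices (R := R)
    ((finite_setOf_mem_or_inv_mem X).image r)
  have hgen : ∀ x, x ∈ X ∨ x⁻¹ ∈ X → D • r x ∈ integralMatrices n R K := fun x hx ↦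
    hD _ (Set.mem_image_of_mem r hx)
  refine ⟨D, hD0, fun x hx ↦ hgen x (.inl hx), fun N γ η hγ hη ↦ ?_⟩
  obtain ⟨b, hb⟩ := exists_algebraMap_eq_trace <|
    sub_mem (hγ.pow_smul_mem hgen) (hη.pow_smul_mem hgen)
  refine ⟨b, hb.trans ?_⟩
  rw [trace_sub, trace_smul, trace_smul, smul_sub]
  rfl

theorem exists_subalgebra_algHom_quotient [IsDomain R] [IsFractionRing R K] (P : Ideal R)
    [P.IsMaximal] : ∃ A : Subalgebra R K, Nonempty (A →ₐ[R] R ⧸ P) ∧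
      ∀ d ∉ P, ∀ x : K, IsLocalization.IsInteger R (d • x) → x ∈ A := by
  let _ := Ideal.Quotient.field P
  let A := Localization.subalgebra.ofField K P.primeCompl P.primeCompl_le_nonZeroDivisors
  have hunit : ∀ d : P.primeCompl, IsUnit (Algebra.ofId R (R ⧸ P) d) := fun d ↦
    isUnit_iff_ne_zero.2 (Ideal.Quotient.eq_zero_iff_mem.not.2 d.2)
  refine ⟨A, ⟨IsLocalization.liftAlgHom (M := P.primeCompl) hunit⟩, fun d hd x ⟨b, hb⟩ ↦
    ⟨b, d, hd, ?_⟩⟩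
  have hd0 : algebraMap R K d ≠ 0 := by
    rw [Ne, FaithfulSMul.algebraMap_eq_zero_iff]
    rintro rfl
    exact hd P.zero_mem
  rw [hb, Algebra.smul_def, mul_comm, inv_mul_cancel_left₀ hd0]

theorem exists_specialLinearGroup_map_comp_eq {Γ : Type*} [Group Γ] {X : Set Γ}
    (hX : Subgroup.closure X = ⊤) {A : Subalgebra R K} {ρ : Γ →* SpecialLinearGroup n K}
    (hρ : ∀ x ∈ X, ∀ i j, ρ x i j ∈ A) :
    ∃ σ : Γ →* SpecialLinearGroup n A, (SpecialLinearGroup.map A.val.toRingHom).comp σ = ρ := by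
  let ι := SpecialLinearGroup.map (n := n) A.val.toRingHom
  have hinj : Function.Injective ι := fun M N h ↦
    Subtype.ext (Matrix.map_injective Subtype.val_injective (congrArg Subtype.val h))
  have hrange : ∀ γ, ρ γ ∈ ι.range := by
    suffices Subgroup.closure X ≤ ι.range.comap ρ from fun γ ↦ this (hX ▸ Subgroup.mem_top γ)
    refine (Subgroup.closure_le _).2 fun x hx ↦ ?_
    let M : Matrix n n A := Matrix.of fun i j ↦ ⟨ρ x i j, hρ x hx i j⟩
    have hM : A.val.toRingHom.mapMatrix M = ρ x := rfl
    have hdet : M.det = 1 := Subtype.val_injective <| by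
      change A.val.toRingHom M.det = 1
      rw [RingHom.map_det, hM, Matrix.SpecialLinearGroup.det_coe]
    exact ⟨⟨M, hdet⟩, Subtype.ext hM⟩
  refine ⟨(MonoidHom.ofInjective hinj).symm.toMonoidHom.comp (ρ.codRestrict ι.range hrange), ?_⟩
  ext1 γ
  exact MonoidHom.apply_ofInjective_symm hinj ⟨ρ γ, hrange γ⟩

theorem exists_hom_specialLinearGroup_quotient [IsDomain R] [IsFractionRing R K] (P : Ideal R)
    [P.IsMaximal] {Γ : Type*} [Group Γ] {X : Set Γ} (hX : Subgroup.closure X = ⊤)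
    {ρ : Γ →* SpecialLinearGroup n K} {D : R} (hDP : D ∉ P)
    (hD : ∀ x ∈ X, D • (ρ x : Matrix n n K) ∈ integralMatrices n R K) :
    ∃ f : Γ →* SpecialLinearGroup n (R ⧸ P), ∀ γ η : Γ, ∀ d b : R,
      algebraMap R K b = d • (trace (ρ γ : Matrix n n K) - trace (ρ η : Matrix n n K)) →
        Ideal.Quotient.mk P b = Ideal.Quotient.mk P d *
          (trace (f γ : Matrix n n (R ⧸ P)) - trace (f η : Matrix n n (R ⧸ P))) := by
  obtain ⟨A, ⟨φ⟩, hA⟩ := exists_subalgebra_algHom_quotient (K := K) P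
  obtain ⟨σ, rfl⟩ := exists_specialLinearGroup_map_comp_eq hX fun x hx i j ↦
    hA D hDP _ (mem_integralMatrices.1 (hD x hx) i j)
  refine ⟨(SpecialLinearGroup.map φ.toRingHom).comp σ, fun γ η d b hb ↦ ?_⟩
  have hbA : algebraMap R A b =
      d • (trace (σ γ : Matrix n n A) - trace (σ η : Matrix n n A)) := Subtype.val_injective <| by
    rw [MonoidHom.comp_apply, MonoidHom.comp_apply, trace_specialLinearGroup_map,
      trace_specialLinearGroup_map] at hb
    exact hb
  rw [MonoidHom.comp_apply, MonoidHom.comp_apply, trace_specialLinearGroup_map,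
    trace_specialLinearGroup_map]
  have hbP := congrArg φ hbA
  rw [φ.commutes, map_smul, Algebra.smul_def, map_sub] at hbP
  exact hbP

end Denominators

section Growth

open Matrix NumberField
open scoped Matrix.Norms.Operator

theorem norm_trace_le {n : Type*} [Fintype n] (A : Matrix n n ℂ) :
    ‖trace A‖ ≤ Fintype.card n * ‖A‖ := by
  have hentry (i : n) : ‖A i i‖ ≤ ‖A‖ := by
    rw [← coe_nnnorm (A i i), linfty_opNorm_def, NNReal.coe_le_coe]
    calc ‖A i i‖₊ ≤ ∑ j, ‖A i j‖₊ := Finset.single_le_sum (f := fun j ↦ ‖A i j‖₊)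
          (fun _ _ ↦ zero_le) (Finset.mem_univ i)
      _ ≤ _ := Finset.le_sup (f := fun i ↦ ∑ j, ‖A i j‖₊) (Finset.mem_univ i)
  refine (norm_sum_le_of_le _ fun i _ ↦ hentry i).trans_eq ?_
  rw [Finset.sum_const, Finset.card_univ, nsmul_eq_mul]

variable {Γ n K : Type*} [Group Γ] [Fintype n] [DecidableEq n] [Field K] [NumberField K]

theorem exists_norm_trace_le_pow (X : Finset Γ) (ρ : Γ →* SpecialLinearGroup n K) :
    ∃ B : ℝ, 1 ≤ B ∧ ∀ N ≠ 0, ∀ γ, inBall X N γ → ∀ φ : K →+* ℂ,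
      ‖φ (trace (ρ γ : Matrix n n K))‖ ≤ B ^ N := by
  let r : Γ →* (K →+* ℂ) → Matrix n n ℂ :=
    (RingHom.pi fun φ : K →+* ℂ ↦ φ.mapMatrix).toMonoidHom.comp
      (SpecialLinearGroup.coeMonoidHom.comp ρ)
  obtain ⟨B, hB, hr⟩ := exists_norm_le_mul_pow X r
  set C := Fintype.card n * ‖(1 : (K →+* ℂ) → Matrix n n ℂ)‖
  refine ⟨max 1 C * max 1 B, one_le_mul_of_one_le_of_one_le (le_max_left _ _) (le_max_left _ _),
    fun N hN γ hγ φ ↦ ?_⟩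
  calc ‖φ (trace (ρ γ : Matrix n n K))‖ = ‖trace (r γ φ)‖ :=
        congrArg norm (AddMonoidHom.map_trace φ _)
    _ ≤ Fintype.card n * ‖r γ φ‖ := norm_trace_le _
    _ ≤ Fintype.card n * (‖(1 : (K →+* ℂ) → Matrix n n ℂ)‖ * B ^ N) := by
        gcongr
        exact (norm_le_pi_norm (r γ) φ).trans (hr N γ hγ)
    _ = C * B ^ N := (mul_assoc _ _ _).symm
    _ ≤ max 1 C ^ N * max 1 B ^ N := by
        gcongr
        · exact (le_max_right _ _).trans (le_self_pow₀ (le_max_left _ _) hN)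
        · exact le_max_right _ _
    _ = (max 1 C * max 1 B) ^ N := (mul_pow _ _ _).symm

theorem exists_norm_mul_le_pow (X : Finset Γ) (ρ : Γ →* SpecialLinearGroup n K) (D : 𝓞 K) :
    ∃ E : ℝ, 1 ≤ E ∧ ∀ N ≠ 0, ∀ γ η, inBall X N γ → inBall X N η → ∀ b : 𝓞 K,
      algebraMap (𝓞 K) K b = D ^ N • (trace (ρ γ : Matrix n n K) - trace (ρ η : Matrix n n K)) →
        ∀ φ : K →+* ℂ, ‖φ (D * b : 𝓞 K)‖ ≤ E ^ N := by
  obtain ⟨B, hB, htrace⟩ := exists_norm_trace_le_pow X ρ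
  obtain ⟨H₀, hH₀⟩ := (Set.finite_range fun φ : K →+* ℂ ↦ ‖φ D‖).bddAbove
  set H := max 1 H₀
  have hD (φ : K →+* ℂ) : ‖φ D‖ ≤ H := (hH₀ ⟨φ, rfl⟩).trans (le_max_right 1 H₀)
  have hH : 1 ≤ H := le_max_left 1 H₀
  refine ⟨H * H * (2 * B), one_le_mul_of_one_le_of_one_le
    (one_le_mul_of_one_le_of_one_le hH hH) (by linarith), fun N hN γ η hγ hη b hb φ ↦ ?_⟩
  calc ‖φ (D * b : 𝓞 K)‖
      = ‖φ D‖ * ‖φ D‖ ^ N *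
          ‖φ (trace (ρ γ : Matrix n n K)) - φ (trace (ρ η : Matrix n n K))‖ := by
        rw [RingOfIntegers.coe_eq_algebraMap, map_mul, hb, Algebra.smul_def]
        simp only [map_pow, map_mul, map_sub, norm_mul, norm_pow, mul_assoc]
    _ ≤ H ^ N * H ^ N * (B ^ N + B ^ N) := by
        gcongr
        · exact (hD φ).trans (le_self_pow₀ hH hN)
        · exact hD φ
        · exact norm_sub_le_of_le (htrace N hN γ hγ φ) (htrace N hN η hη φ)
    _ ≤ H ^ N * H ^ N * (2 ^ N * B ^ N) := by
        rw [← two_mul]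
        gcongr
        exact le_self_pow₀ one_le_two hN
    _ = (H * H * (2 * B)) ^ N := by simp only [mul_pow]

theorem exists_log_absNorm_span_lt (X : Finset Γ) (ρ : Γ →* SpecialLinearGroup n K) (D : 𝓞 K) :
    ∃ c : ℕ, 0 < c ∧ ∀ N ≠ 0, ∀ γ η, inBall X N γ → inBall X N η → ∀ b : 𝓞 K,
      algebraMap (𝓞 K) K b = D ^ N • (trace (ρ γ : Matrix n n K) - trace (ρ η : Matrix n n K)) →
        Real.log (Ideal.absNorm (Ideal.span {D * b})) < (c * N : ℕ) := by
  obtain ⟨E, hE, hconj⟩ := exists_norm_mul_le_pow X ρ D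
  set d := Module.finrank ℚ K
  refine ⟨⌊d * Real.log E⌋₊ + 1, Nat.succ_pos _, fun N hN γ η hγ hη b hb ↦ ?_⟩
  calc Real.log (Ideal.absNorm (Ideal.span {D * b})) ≤ d * Real.log (E ^ N) :=
        log_absNorm_span_le (one_le_pow₀ hE) (hconj N hN γ η hγ hη b hb)
    _ = d * Real.log E * N := by
        rw [Real.log_pow]
        ring
    _ < ((⌊d * Real.log E⌋₊ + 1) * N : ℕ) := by
        push_cast
        gcongr
        exact Nat.lt_floor_add_one _

end Growth

section Separation

open Matrix NumberField

variable {Γ : Type*} [Group Γ] {m : ℕ}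

theorem exists_normal_not_isConj_of_trace_ne {F : Type*} [Field F] [Finite F]
    (f : Γ →* SpecialLinearGroup (Fin m) F) {γ η : Γ}
    (h : trace (f γ : Matrix (Fin m) (Fin m) F) ≠ trace (f η : Matrix (Fin m) (Fin m) F)) :
    ∃ (Δ : Subgroup Γ) (_ : Δ.Normal), Δ.FiniteIndex ∧ Δ.index ≤ Nat.card F ^ (m ^ 2 - 1) ∧
      ¬ IsConj (QuotientGroup.mk' Δ γ) (QuotientGroup.mk' Δ η) := by
  have : Finite (SpecialLinearGroup (Fin m) F) := inferInstanceAs (Finite (Subtype _))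
  refine ⟨f.ker, inferInstance, Subgroup.finiteIndex_ker f, ?_,
    not_isConj_mk_ker fun hconj ↦ h (trace_eq_of_isConj hconj)⟩
  rw [Subgroup.index_ker]
  exact (Subgroup.card_le_card_group _).trans (card_specialLinearGroup_le m F)

variable {K : Type*} [Field K] [NumberField K] {X : Finset Γ}

theorem exists_normal_not_isConj_of_mul_notMem (hX : Subgroup.closure (X : Set Γ) = ⊤)
    {ρ : Γ →* SpecialLinearGroup (Fin m) K} {D b d : 𝓞 K} {γ η : Γ}
    (hD : ∀ x ∈ X, D • (ρ x : Matrix (Fin m) (Fin m) K) ∈ integralMatrices (Fin m) (𝓞 K) K)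
    (hb : algebraMap (𝓞 K) K b = d •
      (trace (ρ γ : Matrix (Fin m) (Fin m) K) - trace (ρ η : Matrix (Fin m) (Fin m) K)))
    {P : Ideal (𝓞 K)} (hP : Prime P) (hDbP : D * b ∉ P) :
    ∃ (Δ : Subgroup Γ) (_ : Δ.Normal), Δ.FiniteIndex ∧
      Δ.index ≤ Ideal.absNorm P ^ (m ^ 2 - 1) ∧
      ¬ IsConj (QuotientGroup.mk' Δ γ) (QuotientGroup.mk' Δ η) := by
  have := (Ideal.isPrime_of_prime hP).isMaximal hP.ne_zero
  let _ := Ideal.Quotient.field P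
  have := Ideal.finiteQuotientOfFreeOfNeBot P hP.ne_zero
  obtain ⟨f, hf⟩ := exists_hom_specialLinearGroup_quotient P hX
    (fun hDP ↦ hDbP (P.mul_mem_right b hDP)) hD
  refine exists_normal_not_isConj_of_trace_ne f fun htrace ↦ hDbP (P.mul_mem_left D ?_)
  rw [← Ideal.Quotient.eq_zero_iff_mem, hf γ η d b hb, htrace, sub_self, mul_zero]

theorem propA_polynomial_conj_complexity_general (hX : Subgroup.closure (X : Set Γ) = ⊤)
    (ρ : Γ →* SpecialLinearGroup (Fin m) K) :
    ∃ C : ℕ, 0 < C ∧ ∀ n : ℕ, ∀ γ η : Γ, inBall X n γ → inBall X n η →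
      trace (ρ γ : Matrix (Fin m) (Fin m) K) ≠ trace (ρ η : Matrix (Fin m) (Fin m) K) →
      ∃ (Δ : Subgroup Γ) (_ : Δ.Normal), Δ.FiniteIndex ∧
        Δ.index ≤ C * n ^ (m ^ 2 - 1) ∧
        ¬ IsConj (QuotientGroup.mk' Δ γ) (QuotientGroup.mk' Δ η) := by
  obtain ⟨M, hM, hprime⟩ := exists_prime_notMem_absNorm_le K
  obtain ⟨D, hD0, hD, hint⟩ := exists_smul_generators_mem_and_trace_sub (R := 𝓞 K) X ρ
  obtain ⟨c, hc, hlog⟩ := exists_log_absNorm_span_lt X ρ D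
  refine ⟨(M * c) ^ (m ^ 2 - 1), by positivity, fun n γ η hγ hη hne ↦ ?_⟩
  have hn : n ≠ 0 := by
    rintro rfl
    exact hne (by rw [hγ.eq_one, hη.eq_one])
  obtain ⟨b, hb⟩ := hint n γ η hγ hη
  have hD0 : D ≠ 0 := nonZeroDivisors.ne_zero hD0
  have hb0 : b ≠ 0 := by
    rintro rfl
    rw [map_zero, eq_comm, smul_eq_zero] at hb
    exact hb.elim (pow_ne_zero n hD0) (sub_ne_zero.2 hne)
  obtain ⟨P, hP, hDbP, hcard⟩ :=
    hprime (D * b) (mul_ne_zero hD0 hb0) (c * n) (hlog n hn γ η hγ hη b hb)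
  obtain ⟨Δ, hΔ, hfin, hindex, hconj⟩ := exists_normal_not_isConj_of_mul_notMem hX hD hb hP hDbP
  refine ⟨Δ, hΔ, hfin, hindex.trans ?_, hconj⟩
  rw [← mul_pow, mul_assoc]
  exact Nat.pow_le_pow_left hcard _

end Separation

/-- If `Γ` has property (A) witnessed by `ρ : Γ → SL(m, O_S)` over a ring of `S`-integers
of a number field, then non-conjugate elements of word length at most `n` can be
separated in a finite quotient of order at most `C·n^(m²−1)`. -/
theorem propA_polynomial_conj_complexity
    (Γ : Type*) [Group Γ] (X : Finset Γ) (hX : Subgroup.closure (X : Set Γ) = ⊤)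
    (K : Type*) [Field K] [NumberField K]
    (S : Set (IsDedekindDomain.HeightOneSpectrum (NumberField.RingOfIntegers K)))
    (hS : S.Finite) (m : ℕ)
    (ρ : Γ →* Matrix.SpecialLinearGroup (Fin m) (S.integer K))
    (hA : ∀ γ η : Γ, ¬ IsConj γ η →
      Matrix.trace (↑(ρ γ) : Matrix (Fin m) (Fin m) (S.integer K)) ≠
        Matrix.trace (↑(ρ η) : Matrix (Fin m) (Fin m) (S.integer K))) :
    ∃ C : ℕ, 0 < C ∧ ∀ n : ℕ, ∀ γ η : Γ, inBall X n γ → inBall X n η → ¬ IsConj γ η →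
      ∃ (Δ : Subgroup Γ) (_ : Δ.Normal), Δ.FiniteIndex ∧
        Δ.index ≤ C * n ^ (m ^ 2 - 1) ∧
        ¬ IsConj (QuotientGroup.mk' Δ γ) (QuotientGroup.mk' Δ η) := by
  obtain ⟨C, hC, h⟩ := propA_polynomial_conj_complexity_general hX
    ((Matrix.SpecialLinearGroup.map (S.integer K).subtype).comp ρ)
  refine ⟨C, hC, fun n γ η hγ hη hconj ↦ h n γ η hγ hη fun htrace ↦ hA γ η hconj ?_⟩
  rw [MonoidHom.comp_apply, MonoidHom.comp_apply, trace_specialLinearGroup_map,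
    trace_specialLinearGroup_map] at htrace
  exact Subtype.val_injective htrace
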